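/- arXiv:1803.11073 — 2 statements merged into one kernel-verified Lean document; each statement's English description precedes it below -/
import Mathlib

section
/- Let X be an infinite separable locally compact metric space, let f : X → X be a continuous weakly mixing map, and let β denote the diameter of X (β = ∞ if X is unbounded). Then there exist countably infinitely many pairwise disjoint Cantor sets S⁽¹⁾, S⁽²⁾, S⁽³⁾, … of totally transitive points of f whose union S = ⋃_{j≥1} S⁽ʲ⁾ is dense in X and is a β-scrambled set of fⁿ for every n ≥ 1: for all distinct x, y ∈ S and every n ≥ 1, liminf_{k→∞} ρ(f^{nk}(x), f^{nk}(y)) = 0 and limsup_{k→∞} ρ(f^{nk}(x), f^{nk}(y)) ≥ β (interpreted in [0,∞], e.g. via the extended distance, when β = ∞). -/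
open Filter ENNReal

/-- `f` is (topologically) weakly mixing. -/
def WeaklyMixing {X : Type*} [TopologicalSpace X] (f : X → X) : Prop :=
  ∀ U₁ U₂ V₁ V₂ : Set X, IsOpen U₁ → IsOpen U₂ → IsOpen V₁ → IsOpen V₂ →
    U₁.Nonempty → U₂.Nonempty → V₁.Nonempty → V₂.Nonempty →
    ∃ n : ℕ, 1 ≤ n ∧ (f^[n] '' U₁ ∩ V₁).Nonempty ∧ (f^[n] '' U₂ ∩ V₂).Nonempty

/-- A Cantor set: a nonempty compact, perfect, totally disconnected subset. -/
def IsCantorSet {X : Type*} [TopologicalSpace X] (C : Set X) : Prop :=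
  C.Nonempty ∧ IsCompact C ∧ Perfect C ∧ IsTotallyDisconnected C

/-- `x` is a totally transitive point of `g`. -/
def TotallyTransitivePoint {Y : Type*} [TopologicalSpace Y] (g : Y → Y) (x : Y) : Prop :=
  ∀ k : ℕ, 1 ≤ k → Dense (Set.range fun m : ℕ => g^[k * m] x)

section Helpers

variable {X : Type*}

/-- The preimage of a nonempty open set under an iterate is nonempty. -/
lemma wm_preimage_nonempty [TopologicalSpace X] {f : X → X} (hf : Continuous f)
    (hwm : WeaklyMixing f) (k : ℕ) {V : Set X} (hV : IsOpen V) (hne : V.Nonempty) :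
    (f^[k] ⁻¹' V).Nonempty := by
  induction k with
  | zero => exact hne
  | succ k ih =>
    have ho : IsOpen (f^[k] ⁻¹' V) := hV.preimage (hf.iterate k)
    obtain ⟨n, hn, ⟨y, ⟨x, _, rfl⟩, hy⟩, _⟩ := hwm _ _ _ _ ho ho ho ho ih ih ih ih
    obtain ⟨m, rfl⟩ : ∃ m, n = m + 1 := ⟨n - 1, by omega⟩
    rw [Function.iterate_succ_apply'] at hy
    exact ⟨f^[m] x, hy⟩

/-- Furstenberg's intersection lemma for finite families. -/
lemma wm_finset [TopologicalSpace X] [Nonempty X] {f : X → X} (hf : Continuous f)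
    (hwm : WeaklyMixing f) {ι : Type*} (U V : ι → Set X)
    (hU : ∀ i, IsOpen (U i)) (hV : ∀ i, IsOpen (V i))
    (hU' : ∀ i, (U i).Nonempty) (hV' : ∀ i, (V i).Nonempty) (s : Finset ι) :
    ∃ A B : Set X, IsOpen A ∧ IsOpen B ∧ A.Nonempty ∧ B.Nonempty ∧
      ∀ n, (A ∩ f^[n] ⁻¹' B).Nonempty → ∀ i ∈ s, (U i ∩ f^[n] ⁻¹' V i).Nonempty := by
  classical
  induction s using Finset.induction_on with
  | empty =>
    exact ⟨Set.univ, Set.univ, isOpen_univ, isOpen_univ, Set.univ_nonempty, Set.univ_nonempty,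
      by simp⟩
  | insert a s ha ih =>
    obtain ⟨A, B, hA, hB, hA', hB', h⟩ := ih
    obtain ⟨n, -, ⟨y, ⟨x, hx, rfl⟩, hy⟩, ⟨z, ⟨w, hw, rfl⟩, hz⟩⟩ :=
      hwm (U a) (V a) A B (hU a) (hV a) hA hB (hU' a) (hV' a) hA' hB'
    refine ⟨U a ∩ f^[n] ⁻¹' A, V a ∩ f^[n] ⁻¹' B, (hU a).inter (hA.preimage (hf.iterate n)),
      (hV a).inter (hB.preimage (hf.iterate n)), ⟨x, hx, hy⟩, ⟨w, hw, hz⟩, ?_⟩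
    rintro k ⟨u, ⟨hu1, hu2⟩, hu3, hu4⟩ i hi
    rcases Finset.mem_insert.1 hi with rfl | hi
    · exact ⟨u, hu1, hu3⟩
    · refine h k ⟨f^[n] u, hu2, ?_⟩ i hi
      simp only [Set.mem_preimage] at hu4 ⊢
      rw [← Function.iterate_add_apply] at hu4 ⊢
      rwa [Nat.add_comm]

/-- Simultaneous hitting times that are large multiples of `K`. -/
lemma wm_hit [TopologicalSpace X] [Nonempty X] {f : X → X} (hf : Continuous f)
    (hwm : WeaklyMixing f) {ι : Type*} [Finite ι] (U V : ι → Set X)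
    (hU : ∀ i, IsOpen (U i)) (hV : ∀ i, IsOpen (V i))
    (hU' : ∀ i, (U i).Nonempty) (hV' : ∀ i, (V i).Nonempty) (K N : ℕ) (hK : 0 < K) :
    ∃ n, N ≤ n ∧ K ∣ n ∧ ∀ i, (U i ∩ f^[n] ⁻¹' V i).Nonempty := by
  cases nonempty_fintype ι
  obtain ⟨A, B, hA, hB, hA', hB', h⟩ := wm_finset hf hwm
    (fun p : ι × Fin K => U p.1) (fun p => f^[N + p.2] ⁻¹' V p.1) (fun p => hU _)
    (fun p => (hV _).preimage (hf.iterate _)) (fun p => hU' _)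
    (fun p => wm_preimage_nonempty hf hwm _ (hV _) (hV' _)) Finset.univ
  obtain ⟨n, -, ⟨y, ⟨x, hx, rfl⟩, hy⟩, -⟩ := hwm A A B B hA hA hB hB hA' hA' hB' hB'
  have h1 := h n ⟨x, hx, hy⟩
  refine ⟨N + (K - (n + N) % K) % K + n, by omega, ?_, fun i => ?_⟩
  · have h2 : (n + N) % K < K := Nat.mod_lt _ hK
    apply Nat.dvd_of_mod_eq_zero
    have : N + (K - (n + N) % K) % K + n = (n + N) + (K - (n + N) % K) % K := by ring
    rw [this, Nat.add_mod, Nat.mod_mod, ← Nat.add_mod_mod, ← Nat.add_mod]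
    rcases Nat.eq_zero_or_pos ((n + N) % K) with h0 | h0
    · rw [Nat.add_mod, h0]; simp
    · rw [Nat.add_mod, Nat.mod_mod, Nat.mod_eq_of_lt (show K - (n + N) % K < K by omega),
        Nat.add_sub_of_le h2.le, Nat.mod_self]
  · obtain ⟨u, hu, hv⟩ := h1 (i, ⟨(K - (n + N) % K) % K, Nat.mod_lt _ hK⟩) (Finset.mem_univ _)
    refine ⟨u, hu, ?_⟩
    simp only [Set.mem_preimage] at hv ⊢
    rw [← Function.iterate_add_apply] at hv
    exact hv

/-- Shrinking a finite family so that finitely many targets are hit. -/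
lemma wm_shrink [TopologicalSpace X] [Nonempty X] {f : X → X} (hf : Continuous f)
    (hwm : WeaklyMixing f) {ι J : Type*} [Finite ι] (U : ι → Set X) (T : J → ι → Set X)
    (hU : ∀ i, IsOpen (U i)) (hT : ∀ τ i, IsOpen (T τ i))
    (hU' : ∀ i, (U i).Nonempty) (hT' : ∀ τ i, (T τ i).Nonempty) (K N : ℕ) (hK : 0 < K)
    (s : Finset J) :
    ∃ V : ι → Set X, (∀ i, IsOpen (V i)) ∧ (∀ i, (V i).Nonempty) ∧ (∀ i, V i ⊆ U i) ∧
      ∀ τ ∈ s, ∃ n, N ≤ n ∧ K ∣ n ∧ ∀ i, ∀ x ∈ V i, f^[n] x ∈ T τ i := by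
  classical
  induction s using Finset.induction_on with
  | empty => exact ⟨U, hU, hU', fun _ => subset_rfl, by simp⟩
  | insert a s ha ih =>
    obtain ⟨V, hV, hV', hVU, h⟩ := ih
    obtain ⟨n, hn, hKn, hh⟩ := wm_hit hf hwm V (T a) hV (hT a) hV' (hT' a) K N hK
    refine ⟨fun i => V i ∩ f^[n] ⁻¹' T a i, fun i => (hV i).inter ((hT a i).preimage (hf.iterate n)),
      hh, fun i => Set.inter_subset_left.trans (hVU i), ?_⟩
    intro τ hτ
    rcases Finset.mem_insert.1 hτ with rfl | hτ
    · exact ⟨n, hn, hKn, fun i x hx => hx.2⟩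
    · obtain ⟨m, hm, hKm, hmm⟩ := h τ hτ
      exact ⟨m, hm, hKm, fun i x hx => hmm i x hx.1⟩

/-- The full shrinking step in a locally compact metric space. -/
lemma wm_step [MetricSpace X] [Nonempty X] [LocallyCompactSpace X] {f : X → X}
    (hf : Continuous f) (hwm : WeaklyMixing f) {ι J : Type*} [Finite ι] [Finite J]
    (U : ι → Set X) (T : J → ι → Set X)
    (hU : ∀ i, IsOpen (U i)) (hT : ∀ τ i, IsOpen (T τ i))
    (hU' : ∀ i, (U i).Nonempty) (hT' : ∀ τ i, (T τ i).Nonempty) (K N : ℕ) (hK : 0 < K)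
    (ε : ℝ) (hε : 0 < ε) :
    ∃ V : ι → Set X, (∀ i, IsOpen (V i)) ∧ (∀ i, (V i).Nonempty) ∧ (∀ i, closure (V i) ⊆ U i) ∧
      (∀ i, IsCompact (closure (V i))) ∧ (∀ i, ∀ x ∈ V i, ∀ y ∈ V i, dist x y < ε) ∧
      ∀ τ, ∃ n, N ≤ n ∧ K ∣ n ∧ ∀ i, ∀ x ∈ V i, f^[n] x ∈ T τ i := by
  cases nonempty_fintype J
  obtain ⟨W, hW, hW', hWU, h⟩ := wm_shrink hf hwm U T hU hT hU' hT' K N hK Finset.univ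
  have key : ∀ i, ∃ V : Set X, IsOpen V ∧ V.Nonempty ∧ closure V ⊆ W i ∧ IsCompact (closure V) ∧
      ∀ x ∈ V, ∀ y ∈ V, dist x y < ε := by
    intro i
    obtain ⟨x, hx⟩ := hW' i
    obtain ⟨r, hr, hrc⟩ := Metric.exists_isCompact_closedBall x
    obtain ⟨δ, hδ, hδW⟩ := Metric.nhds_basis_closedBall.mem_iff.1 ((hW i).mem_nhds hx)
    have hpos : 0 < min (min r δ) (ε / 2) := by positivity
    have hcl : closure (Metric.ball x (min (min r δ) (ε / 2))) ⊆
        Metric.closedBall x (min (min r δ) (ε / 2)) := Metric.closure_ball_subset_closedBall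
    refine ⟨Metric.ball x (min (min r δ) (ε / 2)), Metric.isOpen_ball, ⟨x, by simpa using hpos⟩,
      hcl.trans ((Metric.closedBall_subset_closedBall (by simp)).trans hδW),
      hrc.of_isClosed_subset isClosed_closure
        (hcl.trans (Metric.closedBall_subset_closedBall (by simp))), ?_⟩
    intro a ha b hb
    have h1 : dist a x < ε / 2 := lt_of_lt_of_le ha (min_le_right _ _)
    have h2 : dist b x < ε / 2 := lt_of_lt_of_le hb (min_le_right _ _)
    have := dist_triangle_right a b x
    linarith
  choose V h1 h2 h3 h4 h5 using key
  refine ⟨V, h1, h2, fun i => (h3 i).trans (hWU i), h4, h5, fun τ => ?_⟩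
  obtain ⟨n, hn, hKn, hh⟩ := h τ (Finset.mem_univ _)
  exact ⟨n, hn, hKn, fun i x hx => hh i x (h3 i (subset_closure hx))⟩

/-- Stages of the Cantor scheme. -/
def WMStage (X : Type*) [TopologicalSpace X] (K : ℕ) : Type _ :=
  {U : Fin K × (Fin K → Bool) → Set X // (∀ p, IsOpen (U p)) ∧ ∀ p, (U p).Nonempty}

/-- The parent set of a node of stage `K + 1`. -/
def wmParent (B : ℕ → Set X) (K : ℕ) (U : Fin K × (Fin K → Bool) → Set X)
    (p : Fin (K + 1) × (Fin (K + 1) → Bool)) : Set X :=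
  if h : p.1.1 < K then U (⟨p.1.1, h⟩, fun i => p.2 i.castSucc) else B K

/-- The Cantor scheme. -/
lemma wm_scheme [MetricSpace X] [Nonempty X] [LocallyCompactSpace X] {f : X → X}
    (hf : Continuous f) (hwm : WeaklyMixing f) (B : ℕ → Set X) (hB : ∀ i, IsOpen (B i))
    (hB' : ∀ i, (B i).Nonempty) :
    ∃ U : (K : ℕ) → Fin K × (Fin K → Bool) → Set X,
      ∀ K, (∀ p, (U K p).Nonempty) ∧
        (∀ p, closure (U (K + 1) p) ⊆ wmParent B K (U K) p) ∧
        (∀ p, IsCompact (closure (U (K + 1) p))) ∧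
        (∀ p, ∀ x ∈ U (K + 1) p, ∀ y ∈ U (K + 1) p, dist x y < 1 / ((K : ℝ) + 1)) ∧
        ∀ τ : Fin (K + 1) × (Fin (K + 1) → Bool) → Fin (K + 1),
          ∃ n, K ≤ n ∧ K.factorial ∣ n ∧ ∀ p, ∀ x ∈ U (K + 1) p, f^[n] x ∈ B (τ p) := by
  have step : ∀ K (U : WMStage X K), ∃ V : WMStage X (K + 1),
        (∀ p, closure (V.1 p) ⊆ wmParent B K U.1 p) ∧
        (∀ p, IsCompact (closure (V.1 p))) ∧
        (∀ p, ∀ x ∈ V.1 p, ∀ y ∈ V.1 p, dist x y < 1 / ((K : ℝ) + 1)) ∧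
        ∀ τ : Fin (K + 1) × (Fin (K + 1) → Bool) → Fin (K + 1),
          ∃ n, K ≤ n ∧ K.factorial ∣ n ∧ ∀ p, ∀ x ∈ V.1 p, f^[n] x ∈ B (τ p) := by
    intro K U
    obtain ⟨V, h1, h2, h3, h4, h5, h6⟩ := wm_step hf hwm (wmParent B K U.1)
      (fun (τ : Fin (K + 1) × (Fin (K + 1) → Bool) → Fin (K + 1)) p => B (τ p))
      (by
        intro p; unfold wmParent; split_ifs
        · exact U.2.1 _
        · exact hB _) (fun _ _ => hB _)
      (by
        intro p; unfold wmParent; split_ifs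
        · exact U.2.2 _
        · exact hB' _) (fun _ _ => hB' _) K.factorial K K.factorial_pos (1 / ((K : ℝ) + 1))
        (by positivity)
    exact ⟨⟨V, h1, h2⟩, h3, h4, h5, h6⟩
  choose F hF using step
  let G : (K : ℕ) → WMStage X K := fun K =>
    Nat.rec (motive := fun K => WMStage X K)
      ⟨fun p => p.1.elim0, fun p => p.1.elim0, fun p => p.1.elim0⟩ (fun K U => F K U) K
  exact ⟨fun K => (G K).1, fun K => ⟨(G K).2.2, hF K (G K)⟩⟩

/-- The parametrized family of points. -/
lemma wm_points [MetricSpace X] [Nonempty X] [LocallyCompactSpace X] {f : X → X}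
    (hf : Continuous f) (hwm : WeaklyMixing f) (B : ℕ → Set X) (hB : ∀ i, IsOpen (B i))
    (hB' : ∀ i, (B i).Nonempty) :
    ∃ φ : ℕ → (ℕ → Bool) → X, (∀ j, Continuous (φ j)) ∧ (∀ j σ, φ j σ ∈ B j) ∧
      ∀ j σ j' σ', (j ≠ j' ∨ σ ≠ σ') → ∀ m, 1 ≤ m → ∀ N a b,
        ∃ t, N ≤ t ∧ m ∣ t ∧ f^[t] (φ j σ) ∈ B a ∧ f^[t] (φ j' σ') ∈ B b := by
  obtain ⟨U, hU⟩ := wm_scheme hf hwm B hB hB'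
  let C : ℕ → (ℕ → Bool) → ℕ → Set X := fun j σ i =>
    U (j + i + 1) (⟨j, by omega⟩, fun k => σ k)
  have hC0 : ∀ j σ, closure (C j σ 0) ⊆ B j := by
    intro j σ
    have := (hU j).2.1 (⟨j, by omega⟩, fun k => σ k)
    simpa [wmParent] using this
  have hCs : ∀ j σ i, closure (C j σ (i + 1)) ⊆ C j σ i := by
    intro j σ i
    have := (hU (j + i + 1)).2.1 (⟨j, by omega⟩, fun k => σ k)
    have h1 : j < j + i + 1 := by omega
    simp only [wmParent, h1, dite_true] at this
    exact this
  have hne : ∀ j σ, (⋂ i, closure (C j σ i)).Nonempty := by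
    intro j σ
    apply IsCompact.nonempty_iInter_of_sequence_nonempty_isCompact_isClosed
    · intro i; exact (hCs j σ i).trans subset_closure
    · intro i; exact ((hU _).1 _).closure
    · exact (hU (j + 0)).2.2.1 _
    · intro i; exact isClosed_closure
  choose φ hφ using hne
  have hmem : ∀ j σ i, φ j σ ∈ C j σ i := fun j σ i =>
    hCs j σ i (Set.mem_iInter.1 (hφ j σ) (i + 1))
  have hmem' : ∀ j σ K (h : j < K + 1), φ j σ ∈ U (K + 1) (⟨j, h⟩, fun k => σ k) := by
    intro j σ K h
    obtain ⟨i, rfl⟩ : ∃ i, K = j + i := ⟨K - j, by omega⟩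
    exact hmem j σ i
  refine ⟨φ, ?_, fun j σ => hC0 j σ (subset_closure (hmem j σ 0)), ?_⟩
  · intro j
    rw [continuous_iff_continuousAt]
    intro σ
    rw [ContinuousAt, Metric.tendsto_nhds]
    intro ε hε
    obtain ⟨n, hn⟩ := exists_nat_one_div_lt hε
    have hev : ∀ᶠ σ' in nhds σ, ∀ k ∈ Finset.range (j + n + 1), σ' k = σ k := by
      rw [Filter.eventually_all_finset]
      intro k _
      exact ((continuous_apply k).continuousAt (x := σ)).eventually
        (show ∀ᶠ b in nhds (σ k), b = σ k by simp)
    filter_upwards [hev] with σ' hσ'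
    have h1 := hmem' j σ (j + n) (by omega)
    have h2 := hmem' j σ' (j + n) (by omega)
    have h3 : (fun k : Fin (j + n + 1) => σ' k) = fun k : Fin (j + n + 1) => σ k := by
      funext k; exact hσ' k (Finset.mem_range.2 k.2)
    rw [h3] at h2
    refine ((hU (j + n)).2.2.2.1 _ _ h2 _ h1).trans (lt_of_le_of_lt ?_ hn)
    apply one_div_le_one_div_of_le
    · positivity
    · push_cast
      have : (0 : ℝ) ≤ j := by positivity
      linarith
  · intro j σ j' σ' hne m hm N a b
    obtain ⟨c, hc⟩ : ∃ c, j ≠ j' ∨ σ c ≠ σ' c := by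
      rcases hne with h | h
      · exact ⟨0, Or.inl h⟩
      · obtain ⟨c, hc⟩ := Function.ne_iff.1 h
        exact ⟨c, Or.inr hc⟩
    let K := N + m + a + b + c + j + j'
    have hj : j < K + 1 := by omega
    have hj' : j' < K + 1 := by omega
    let p : Fin (K + 1) × (Fin (K + 1) → Bool) := (⟨j, hj⟩, fun k => σ k)
    let p' : Fin (K + 1) × (Fin (K + 1) → Bool) := (⟨j', hj'⟩, fun k => σ' k)
    have hpp : p' ≠ p := by
      intro h
      rcases hc with hc | hc
      · exact hc (congrArg (fun q => (q.1 : ℕ)) h).symm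
      · exact hc (congrFun (congrArg Prod.snd h) ⟨c, by omega⟩).symm
    classical
    obtain ⟨n, hn, hKn, hh⟩ := (hU K).2.2.2.2
      (fun q => if q = p then ⟨a, by omega⟩ else ⟨b, by omega⟩)
    refine ⟨n, by omega, (Nat.dvd_factorial hm (by omega)).trans hKn, ?_, ?_⟩
    · simpa using hh p _ (hmem' j σ K hj)
    · have hlast := hh p' _ (hmem' j' σ' K hj')
      simpa [hpp] using hlast

/-- A countable pi-base. -/
lemma exists_pi_base (X : Type*) [MetricSpace X] [Nonempty X]
    [TopologicalSpace.SeparableSpace X] :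
    ∃ B : ℕ → Set X, (∀ i, IsOpen (B i)) ∧ (∀ i, (B i).Nonempty) ∧
      ∀ O : Set X, IsOpen O → O.Nonempty → ∃ i, B i ⊆ O := by
  let b : ℕ → Set X := fun i =>
    Metric.ball (TopologicalSpace.denseSeq X i.unpair.1) (1 / ((i.unpair.2 : ℝ) + 1))
  refine ⟨b, fun i => Metric.isOpen_ball, fun i => ⟨_, Metric.mem_ball_self (by positivity)⟩, ?_⟩
  intro O hO hne
  obtain ⟨k, hk⟩ := (TopologicalSpace.denseRange_denseSeq X).exists_mem_open hO hne
  obtain ⟨ε, hε, h⟩ := Metric.isOpen_iff.1 hO _ hk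
  obtain ⟨n, hn⟩ := exists_nat_one_div_lt hε
  refine ⟨Nat.pair k n, ?_⟩
  simp only [b, Nat.unpair_pair]
  exact (Metric.ball_subset_ball hn.le).trans h

/-- The range of an injective continuous map of the Cantor space is a Cantor set. -/
lemma isCantorSet_range [TopologicalSpace X] [T2Space X] (φ : (ℕ → Bool) → X)
    (hc : Continuous φ) (hi : Function.Injective φ) : IsCantorSet (Set.range φ) := by
  have hcomp : IsCompact (Set.range φ) := isCompact_range hc
  refine ⟨Set.range_nonempty _, hcomp, ⟨hcomp.isClosed, ?_⟩, ?_⟩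
  · rintro _ ⟨σ, rfl⟩
    rw [accPt_iff_nhds]
    intro W hW
    have ht : Tendsto (fun n : ℕ => Function.update σ n (!σ n)) atTop (nhds σ) := by
      rw [tendsto_pi_nhds]
      intro k
      apply tendsto_const_nhds.congr'
      filter_upwards [eventually_gt_atTop k] with n hn
      rw [Function.update_of_ne hn.ne]
    obtain ⟨n, hn⟩ := (((hc.tendsto σ).comp ht).eventually_mem hW).exists
    refine ⟨_, ⟨hn, Set.mem_range_self _⟩, fun h => ?_⟩
    have := congrFun (hi h) n
    simp at this
  · exact (hc.isClosedEmbedding hi).isEmbedding.isTotallyDisconnected_range.2 inferInstance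

end Helpers

theorem dense_beta_scrambled_of_weaklyMixing {X : Type*} [MetricSpace X] [Infinite X]
    [TopologicalSpace.SeparableSpace X] [LocallyCompactSpace X]
    (f : X → X) (hf : Continuous f) (hwm : WeaklyMixing f)
    (β : ℝ≥0∞) (hβ : β = EMetric.diam (Set.univ : Set X)) :
    ∃ S : ℕ → Set X,
      (∀ i j, i ≠ j → Disjoint (S i) (S j)) ∧
      (∀ j, IsCantorSet (S j)) ∧
      (∀ j, ∀ x ∈ S j, TotallyTransitivePoint f x) ∧
      Dense (⋃ j, S j) ∧
      (∀ n : ℕ, 1 ≤ n → ∀ x ∈ ⋃ j, S j, ∀ y ∈ ⋃ j, S j, x ≠ y →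
        atTop.liminf (fun k : ℕ => edist (f^[n * k] x) (f^[n * k] y)) = 0 ∧
        β ≤ atTop.limsup (fun k : ℕ => edist (f^[n * k] x) (f^[n * k] y))) := by
  classical
  obtain ⟨B, hB, hB', hπ⟩ := exists_pi_base X
  obtain ⟨φ, hc, hmem, hhit⟩ := wm_points hf hwm B hB hB'
  have hopen : ∀ j σ j' σ', (j ≠ j' ∨ σ ≠ σ') → ∀ m, 1 ≤ m → ∀ N, ∀ O O' : Set X,
      IsOpen O → IsOpen O' → O.Nonempty → O'.Nonempty →
      ∃ k, N ≤ k ∧ f^[m * k] (φ j σ) ∈ O ∧ f^[m * k] (φ j' σ') ∈ O' := by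
    intro j σ j' σ' hne m hm N O O' hO hO' hOn hOn'
    obtain ⟨a, ha⟩ := hπ O hO hOn
    obtain ⟨b, hb⟩ := hπ O' hO' hOn'
    obtain ⟨t, ht, ⟨k, rfl⟩, h1, h2⟩ := hhit j σ j' σ' hne m hm (m * N) a b
    exact ⟨k, Nat.le_of_mul_le_mul_left ht hm, ha h1, hb h2⟩
  have hinj : ∀ j σ j' σ', (j ≠ j' ∨ σ ≠ σ') → φ j σ ≠ φ j' σ' := by
    intro j σ j' σ' hne heq
    obtain ⟨x, y, hxy⟩ := exists_pair_ne X
    obtain ⟨u, v, hu, hv, hxu, hyv, huv⟩ := t2_separation hxy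
    obtain ⟨k, -, h1, h2⟩ := hopen j σ j' σ' hne 1 le_rfl 0 u v hu hv ⟨x, hxu⟩ ⟨y, hyv⟩
    rw [heq] at h1
    exact Set.disjoint_left.1 huv h1 h2
  refine ⟨fun j => Set.range (φ j), ?_, ?_, ?_, ?_, ?_⟩
  · intro i j hij
    rw [Set.disjoint_left]
    rintro _ ⟨σ, rfl⟩ ⟨σ', h⟩
    exact hinj i σ j σ' (Or.inl hij) h.symm
  · intro j
    refine isCantorSet_range _ (hc j) fun σ σ' h => ?_
    by_contra hne
    exact hinj j σ j σ' (Or.inr hne) h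
  · rintro j _ ⟨σ, rfl⟩ k hk
    rw [dense_iff_inter_open]
    intro O hO hOn
    obtain ⟨m, -, h, -⟩ := hopen j σ (j + 1) σ (Or.inl (by omega)) k hk 0 O O hO hO hOn hOn
    exact ⟨_, h, m, rfl⟩
  · rw [dense_iff_inter_open]
    intro O hO hOn
    obtain ⟨i, hi⟩ := hπ O hO hOn
    exact ⟨φ i (fun _ => false), hi (hmem _ _), Set.mem_iUnion.2 ⟨i, Set.mem_range_self _⟩⟩
  · intro n hn x hx y hy hxy
    obtain ⟨j, σ, rfl⟩ := Set.mem_iUnion.1 hx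
    obtain ⟨j', σ', rfl⟩ := Set.mem_iUnion.1 hy
    have hne : j ≠ j' ∨ σ ≠ σ' := by
      by_contra! h
      obtain ⟨rfl, rfl⟩ := h
      exact hxy rfl
    have H : ∀ (R : Set (X × X)), IsOpen R → R.Nonempty →
        ∃ᶠ k in atTop, (f^[n * k] (φ j σ), f^[n * k] (φ j' σ')) ∈ R := by
      rintro R hR ⟨⟨a, b⟩, hab⟩
      obtain ⟨u, v, hu, hv, hau, hbv, huv⟩ := isOpen_prod_iff.1 hR a b hab
      rw [frequently_atTop]
      intro N
      obtain ⟨k, hk, h1, h2⟩ := hopen j σ j' σ' hne n hn N u v hu hv ⟨a, hau⟩ ⟨b, hbv⟩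
      exact ⟨k, hk, huv ⟨h1, h2⟩⟩
    constructor
    · refine le_antisymm (le_of_forall_gt fun c hc0 => ?_) bot_le
      obtain ⟨d, hd0, hdc⟩ := exists_between hc0
      refine lt_of_le_of_lt (liminf_le_of_frequently_le' ?_) hdc
      obtain ⟨a⟩ := (inferInstance : Nonempty X)
      exact (H {q | edist q.1 q.2 < d}
        (isOpen_lt (continuous_fst.edist continuous_snd) continuous_const)
        ⟨(a, a), by simpa using hd0⟩).mono fun k hk => le_of_lt hk
    · refine le_of_forall_lt fun c hcβ => ?_
      obtain ⟨d, hcd, hdβ⟩ := exists_between hcβ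
      refine lt_of_lt_of_le hcd (le_limsup_of_frequently_le' ?_)
      have hdβ' : d < Metric.ediam (Set.univ : Set X) := by
        rw [hβ] at hdβ; exact hdβ
      simp only [Metric.ediam, lt_iSup_iff] at hdβ'
      obtain ⟨a, -, b, -, hab⟩ := hdβ'
      exact (H {q | d < edist q.1 q.2}
        (isOpen_lt continuous_const (continuous_fst.edist continuous_snd))
        ⟨(a, b), hab⟩).mono fun k hk => le_of_lt hk
end

section
/- Let X be an infinite separable locally compact metric space, let f : X → X be a continuous weakly mixing map, let β denote the diameter of X (β = ∞ if X is unbounded), and let x₁, x₂, x₃, … be countably infinitely many points of X each of whose orbits under f has compact closure. Then there exist countably infinitely many pairwise disjoint Cantor sets S⁽¹⁾, S⁽²⁾, S⁽³⁾, … of totally transitive points of f whose union S = ⋃_{j≥1} S⁽ʲ⁾ is dense in X and is a β-scrambled set of fⁿ for every n ≥ 1, and such that for every point x ∈ {x₁, x₂, x₃, …} and every point c ∈ ⋃_{i≥0} fⁱ(S), liminf_{n→∞} ρ(fⁿ(x), fⁿ(c)) = 0 and limsup_{n→∞} ρ(fⁿ(x), fⁿ(c)) ≥ β/2, i.e.,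 {x, c} is a (β/2)-scrambled set of f. -/
open Filter ENNReal

section Myc
open Set Topology

theorem polish_of_locallyCompact {X : Type*} [MetricSpace X]
    [TopologicalSpace.SeparableSpace X] [LocallyCompactSpace X] : PolishSpace X := by
  have hemb := UniformSpace.Completion.isDenseEmbedding_coe (α := X)
  have ho : IsOpen (range ((↑) : X → UniformSpace.Completion X)) := by
    rw [isOpen_iff_mem_nhds]
    rintro _ ⟨x, rfl⟩
    obtain ⟨C, hC, hxC⟩ := exists_compact_mem_nhds x
    have h1 := hxC
    rw [hemb.isDenseInducing.isInducing.nhds_eq_comap] at h1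
    obtain ⟨W, hW, hWC⟩ := h1
    obtain ⟨W', hW'W, hW'o, hxW'⟩ := mem_nhds_iff.1 hW
    refine mem_of_superset (hW'o.mem_nhds hxW') ?_
    have h2 : W' ⊆ closure (W' ∩ range ((↑) : X → UniformSpace.Completion X)) :=
      hemb.dense.open_subset_closure_inter hW'o
    have h3 : IsClosed (((↑) : X → UniformSpace.Completion X) '' C) :=
      (hC.image (UniformSpace.Completion.continuous_coe X)).isClosed
    refine h2.trans ((closure_minimal ?_ h3).trans (image_subset_range _ _))
    rintro _ ⟨hy, y, rfl⟩
    exact ⟨y, hWC (hW'W hy), rfl⟩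
  have := ho.polishSpace
  exact (hemb.isEmbedding.toHomeomorph).isClosedEmbedding.polishSpace

abbrev CantorSp := ℕ → Bool

def restr (N : ℕ) : C(CantorSp, Fin N → Bool) := ⟨fun s i => s i, by fun_prop⟩
def extd (N : ℕ) (u : Fin N → Bool) : CantorSp := fun k => if h : k < N then u ⟨k, h⟩ else false

def trunc (N : ℕ) : C(CantorSp, CantorSp) := ⟨extd N ∘ restr N,
  (continuous_of_discreteTopology (f := extd N)).comp (restr N).continuous⟩

theorem trunc_tendsto : Tendsto trunc atTop (𝓝 (ContinuousMap.id CantorSp)) := by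
  rw [ContinuousMap.tendsto_iff_tendstoUniformly, tendstoUniformly_iff_tendsto, Pi.uniformity,
    tendsto_iInf]
  intro i
  rw [tendsto_comap_iff]
  intro V hV
  have : ∀ᶠ n : ℕ in atTop, i < n := eventually_gt_atTop i
  rw [mem_map]
  filter_upwards [this.prod_inl ⊤] with q hq
  have : (trunc q.1) q.2 i = q.2 i := by
    simp [trunc, extd, restr, hq]
  simp only [mem_preimage, Function.comp_apply, this]
  exact refl_mem_uniformity hV

theorem pair_open {ι X : Type*} [TopologicalSpace X] {p q : ι} (h : p ≠ q) :
    IsOpenMap (fun z : ι → X => (z p, z q)) := by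
  classical
  refine IsOpenMap.of_sections fun z => ⟨fun a => Function.update (Function.update z p a.1) q a.2, ?_, ?_, ?_⟩
  · have : Continuous fun a : X × X => Function.update (Function.update z p a.1) q a.2 := by fun_prop
    exact this.continuousAt
  · simp
  · intro a
    ext <;> simp [h]

theorem mycielski {X : Type*} [TopologicalSpace X] [PolishSpace X] [Nonempty X]
    (hperf : ∀ x : X, (𝓝[≠] x).NeBot) (R : Set (X × X)) (hR : R ∈ residual (X × X)) :
    ∃ φ : ℕ → C(CantorSp, X), Dense (⋃ j, range (φ j)) ∧
      ∀ i j s t, (i, s) ≠ (j, t) → (φ i s, φ j t) ∈ R ∧ φ i s ≠ φ j t := by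
  let := TopologicalSpace.upgradeIsCompletelyMetrizable X
  obtain ⟨S, hSo, hSd, hSc, hSR⟩ := mem_residual_iff.1 hR
  have hne_open : IsOpen {p : X × X | p.1 ≠ p.2} := isOpen_ne_fun continuous_fst continuous_snd
  have hne_dense : Dense {p : X × X | p.1 ≠ p.2} := by
    rw [dense_iff_inter_open]
    rintro U hU ⟨⟨a, b⟩, hab⟩
    obtain ⟨A, B, hA, hB, ha, hb, hAB⟩ := isOpen_prod_iff.1 hU a b hab
    have := (hperf b)
    by_cases h : a = b
    · obtain ⟨c, hc⟩ := (hperf b).nonempty_of_mem (inter_mem_nhdsWithin {b}ᶜ (hB.mem_nhds hb))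
      exact ⟨(a, c), hAB ⟨ha, hc.2⟩, fun h' => hc.1 (by simp at h' ⊢; rw [← h', h])⟩
    · exact ⟨(a, b), hab, h⟩
  set S' := insert {p : X × X | p.1 ≠ p.2} S with hS'
  have hS'c : S'.Countable := hSc.insert _
  have hS'o : ∀ D ∈ S', IsOpen D := by
    rintro D (rfl | hD); exacts [hne_open, hSo D hD]
  have hS'd : ∀ D ∈ S', Dense D := by
    rintro D (rfl | hD); exacts [hne_dense, hSd D hD]
  -- generic
  let G : Set (X × X) → ℕ → ℕ → ℕ → Set (ℕ → C(CantorSp, X)) := fun D m i j =>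
    {φ | ∀ s t, (i, restr m s) ≠ (j, restr m t) → (φ i s, φ j t) ∈ D}
  have dense_aux : ∀ (P : Set (ℕ → C(CantorSp, X))) (m : ℕ),
      (∀ N, m ≤ N → ∀ O : Set (ℕ × (Fin N → Bool) → X), IsOpen O → O.Nonempty →
        ∃ z ∈ O, (fun j => (⟨fun u => z (j, u), continuous_of_discreteTopology⟩ : C(Fin N → Bool, X)).comp (restr N)) ∈ P) → Dense P := by
    intro P m h
    rw [dense_iff_inter_open]
    rintro O hO ⟨φ, hφ⟩
    have ht : Tendsto (fun N j => (φ j).comp (trunc N)) atTop (𝓝 φ) := by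
      rw [tendsto_pi_nhds]
      intro j
      exact ((ContinuousMap.continuous_postcomp (φ j)).tendsto (ContinuousMap.id CantorSp)).comp trunc_tendsto
    obtain ⟨N, hN, hmN⟩ := ((ht.eventually (hO.mem_nhds hφ)).and (eventually_ge_atTop m)).exists
    let E : (ℕ × (Fin N → Bool) → X) → (ℕ → C(CantorSp, X)) := fun z j =>
      (⟨fun u => z (j, u), continuous_of_discreteTopology⟩ : C(Fin N → Bool, X)).comp (restr N)
    have hE : Continuous E := by
      refine continuous_pi fun j => ?_
      refine (ContinuousMap.continuous_precomp (restr N)).comp ?_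
      refine ContinuousMap.continuous_of_continuous_uncurry _ ?_
      rw [continuous_prod_of_discrete_right]
      intro u
      exact continuous_apply (A := fun _ => X) (j, u)
    obtain ⟨z, hz, hzP⟩ := h N hmN (E ⁻¹' O) (hO.preimage hE) ⟨fun p => φ p.1 (extd N p.2), hN⟩
    exact ⟨_, hz, hzP⟩
  have hGo : ∀ D ∈ S', ∀ m i j, IsOpen (G D m i j) := by
    intro D hD m i j
    let C : Set (CantorSp × CantorSp) := {p | (i, restr m p.1) ≠ (j, restr m p.2)}
    have hC : IsCompact C := by
      apply IsClosed.isCompact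
      have : C = (fun p : CantorSp × CantorSp => ((i, restr m p.1), (j, restr m p.2))) ⁻¹' {q | q.1 ≠ q.2} := rfl
      rw [this]
      exact (isClosed_discrete _).preimage (by fun_prop)
    have h1 : Continuous fun φ : ℕ → C(CantorSp, X) => (φ i).prodMap (φ j) := by
      refine ContinuousMap.continuous_of_continuous_uncurry _ ?_
      change Continuous fun q : (ℕ → C(CantorSp, X)) × (CantorSp × CantorSp) => (q.1 i q.2.1, q.1 j q.2.2)
      fun_prop
    have := (ContinuousMap.isOpen_setOfPred_mapsTo hC (hS'o D hD)).preimage h1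
    convert this using 1
    ext φ
    constructor
    · intro h p hp
      exact h p.1 p.2 hp
    · intro h s t hst
      exact h (x := (s, t)) hst
  have hGd : ∀ D ∈ S', ∀ m i j, Dense (G D m i j) := by
    intro D hD m i j
    refine dense_aux _ m fun N hN O hO hOne => ?_
    have hres : ∀ᶠ z in residual (ℕ × (Fin N → Bool) → X), ∀ p q, p ≠ q → (z p, z q) ∈ D := by
      rw [eventually_countable_forall]; intro p
      rw [eventually_countable_forall]; intro q
      by_cases hpq : p = q
      · simp [hpq]
      · have := tendsto_residual_of_isOpenMap (f := fun z : ℕ × (Fin N → Bool) → X => (z p, z q)) (by fun_prop) (pair_open hpq)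
          (residual_of_dense_open (hS'o D hD) (hS'd D hD))
        exact Filter.mem_of_superset this fun z hz _ => hz
    obtain ⟨z, hzO, hz⟩ := (dense_of_mem_residual hres).inter_open_nonempty O hO hOne
    refine ⟨z, hzO, fun s t hst => hz (i, restr N s) (j, restr N t) fun h => hst ?_⟩
    rw [Prod.ext_iff] at h ⊢
    refine ⟨h.1, ?_⟩
    funext k
    exact congrFun h.2 ⟨k, k.2.trans_le hN⟩
  let B := TopologicalSpace.countableBasis X
  let H : Set X → Set (ℕ → C(CantorSp, X)) := fun V => {φ | ∃ j, φ j (fun _ => false) ∈ V}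
  have hHo : ∀ V ∈ B, IsOpen (H V) := by
    intro V hV
    have : H V = ⋃ j, (fun φ : ℕ → C(CantorSp, X) => φ j (fun _ => false)) ⁻¹' V := by
      ext; simp [H]
    rw [this]
    exact isOpen_iUnion fun j => (TopologicalSpace.isOpen_of_mem_countableBasis hV).preimage (by fun_prop)
  have hHd : ∀ V ∈ B, Dense (H V) := by
    intro V hV
    obtain ⟨v, hv⟩ := TopologicalSpace.nonempty_of_mem_countableBasis hV
    intro φ
    refine mem_closure_of_tendsto (f := fun n => Function.update φ n (ContinuousMap.const CantorSp v)) (b := atTop) ?_ ?_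
    · rw [tendsto_pi_nhds]
      intro j
      refine tendsto_const_nhds.congr' ?_
      filter_upwards [eventually_gt_atTop j] with n hn
      rw [Function.update_of_ne hn.ne]
    · exact Eventually.of_forall fun n => ⟨n, by simpa using hv⟩
  have key : ∀ᶠ φ in residual (ℕ → C(CantorSp, X)), (∀ D ∈ S', ∀ m i j, φ ∈ G D m i j) ∧ ∀ V ∈ B, φ ∈ H V := by
    refine Eventually.and ?_ ?_
    · rw [eventually_countable_ball hS'c]
      intro D hD
      simp only [eventually_countable_forall]
      intro m i j
      exact residual_of_dense_open (hGo D hD m i j) (hGd D hD m i j)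
    · rw [eventually_countable_ball (TopologicalSpace.countable_countableBasis X)]
      intro V hV
      exact residual_of_dense_open (hHo V hV) (hHd V hV)
  have : Nonempty (ℕ → C(CantorSp, X)) := ⟨fun _ => ContinuousMap.const CantorSp (Classical.arbitrary X)⟩
  obtain ⟨φ, hφ1, hφ2⟩ := (dense_of_mem_residual key).nonempty
  refine ⟨φ, ?_, ?_⟩
  · rw [(TopologicalSpace.isBasis_countableBasis X).dense_iff]
    intro V hV _
    obtain ⟨j, hj⟩ := hφ2 V hV
    exact ⟨_, hj, mem_iUnion.2 ⟨j, mem_range_self _⟩⟩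
  · intro i j s t h
    have hm : ∃ m, (i, restr m s) ≠ (j, restr m t) := by
      by_contra! hcon
      apply h
      have h0 := (Prod.ext_iff.1 (hcon 0)).1
      refine Prod.ext h0 ?_
      funext k
      exact congrFun (Prod.ext_iff.1 (hcon (k+1))).2 ⟨k, k.lt_succ_self⟩
    obtain ⟨m, hm⟩ := hm
    have : ∀ D ∈ S', (φ i s, φ j t) ∈ D := fun D hD => hφ1 D hD m i j s t hm
    exact ⟨hSR fun D hD => this D (mem_insert_of_mem _ hD), this _ (mem_insert _ _)⟩

end Myc

section Dyn
open Set Topology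
variable {X : Type*}

/-- `n` belongs to the hitting set of `(U, V)`. -/
def Hit (f : X → X) (n : ℕ) (U V : Set X) : Prop := ∃ a ∈ U, f^[n] a ∈ V

theorem wm_single [TopologicalSpace X] [Nonempty X] {f : X → X} (hf : Continuous f)
    (hwm : WeaklyMixing f) {ι : Type*} (s : Finset ι) (U V : ι → Set X)
    (hU : ∀ i, IsOpen (U i)) (hV : ∀ i, IsOpen (V i)) (hUn : ∀ i, (U i).Nonempty)
    (hVn : ∀ i, (V i).Nonempty) :
    ∃ A B : Set X, IsOpen A ∧ IsOpen B ∧ A.Nonempty ∧ B.Nonempty ∧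
      ∀ n, Hit f n A B → ∀ i ∈ s, Hit f n (U i) (V i) := by
  classical
  induction s using Finset.induction_on with
  | empty => exact ⟨univ, univ, isOpen_univ, isOpen_univ, univ_nonempty, univ_nonempty, by simp⟩
  | insert i s _ ih =>
    obtain ⟨A, B, hA, hB, hAn, hBn, h⟩ := ih
    obtain ⟨m, -, ⟨_, ⟨a, ha, rfl⟩, ha'⟩, ⟨_, ⟨b, hb, rfl⟩, hb'⟩⟩ :=
      hwm A B (U i) (V i) hA hB (hU i) (hV i) hAn hBn (hUn i) (hVn i)
    refine ⟨A ∩ f^[m] ⁻¹' (U i), B ∩ f^[m] ⁻¹' (V i), hA.inter ((hU i).preimage (hf.iterate m)),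
      hB.inter ((hV i).preimage (hf.iterate m)), ⟨a, ha, ha'⟩, ⟨b, hb, hb'⟩, ?_⟩
    rintro n ⟨z, hz, hz'⟩ j hj
    rcases Finset.mem_insert.1 hj with rfl | hj
    · refine ⟨f^[m] z, hz.2, ?_⟩
      rw [← Function.iterate_add_apply, add_comm, Function.iterate_add_apply]
      exact hz'.2
    · exact h n ⟨z, hz.1, hz'.1⟩ j hj

theorem wm_preimage [TopologicalSpace X] [Nonempty X] {f : X → X} (hf : Continuous f)
    (hwm : WeaklyMixing f) (j : ℕ) {V : Set X} (hV : IsOpen V) (hVn : V.Nonempty) :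
    (f^[j] ⁻¹' V).Nonempty := by
  induction j with
  | zero => simpa using hVn
  | succ j ih =>
    have ho := hV.preimage (hf.iterate j)
    obtain ⟨n, hn, ⟨_, ⟨a, -, rfl⟩, ha⟩, -⟩ := hwm univ univ _ _ isOpen_univ isOpen_univ ho ho
      univ_nonempty univ_nonempty ih ih
    obtain ⟨n, rfl⟩ := Nat.exists_eq_add_of_le hn
    refine ⟨f^[n] a, ?_⟩
    rw [mem_preimage, Function.iterate_succ_apply, ← Function.iterate_succ_apply' f n a]
    rwa [mem_preimage, add_comm] at ha

theorem wm_finite [TopologicalSpace X] [Nonempty X] {f : X → X} (hf : Continuous f)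
    (hwm : WeaklyMixing f) {ι : Type*} [Finite ι] (U V : ι → Set X)
    (hU : ∀ i, IsOpen (U i)) (hV : ∀ i, IsOpen (V i)) (hUn : ∀ i, (U i).Nonempty)
    (hVn : ∀ i, (V i).Nonempty) (k N : ℕ) (hk : 1 ≤ k) :
    ∃ n, N ≤ n ∧ ∀ i, Hit f (k * n) (U i) (V i) := by
  classical
  have := Fintype.ofFinite ι
  obtain ⟨A, B, hA, hB, hAn, hBn, h⟩ := wm_single hf hwm (ι := ι × Fin (k * N + k + 1)) Finset.univ
    (fun p => U p.1) (fun p => f^[p.2] ⁻¹' (V p.1)) (fun p => hU _)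
    (fun p => (hV _).preimage (hf.iterate _)) (fun p => hUn _)
    (fun p => wm_preimage hf hwm _ (hV _) (hVn _))
  obtain ⟨n, hn, ⟨_, ⟨a, ha, rfl⟩, ha'⟩, -⟩ := hwm A A B B hA hA hB hB hAn hAn hBn hBn
  have h1 := h n ⟨a, ha, ha'⟩
  refine ⟨N + n / k + 1, (Nat.le_add_right N _).trans (Nat.le_succ _), fun i => ?_⟩
  have e1 := Nat.div_add_mod n k
  have e2 := Nat.mod_lt n (show 0 < k from hk)
  have e3 : k * (N + n / k + 1) = k * N + k * (n / k) + k := by ring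
  have e4 : k * (N + n / k + 1) = (k * N + k - n % k) + n := by omega
  obtain ⟨b, hb, hb'⟩ := h1 (i, ⟨k * N + k - n % k, by omega⟩) (Finset.mem_univ _)
  refine ⟨b, hb, ?_⟩
  rw [e4, Function.iterate_add_apply]
  exact hb'

theorem wm_perfect [TopologicalSpace X] [T2Space X] [Nontrivial X] {f : X → X}
    (hwm : WeaklyMixing f) (x : X) : (𝓝[≠] x).NeBot := by
  rw [neBot_iff]
  intro h
  have hx : IsOpen ({x} : Set X) := by rwa [isOpen_singleton_iff_punctured_nhds]
  obtain ⟨p, q, hpq⟩ := exists_pair_ne X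
  obtain ⟨P, Q, hP, hQ, hp, hq, hd⟩ := t2_separation hpq
  obtain ⟨n, -, ⟨_, ⟨a, ha, rfl⟩, ha'⟩, ⟨_, ⟨b, hb, rfl⟩, hb'⟩⟩ := hwm {x} {x} P Q hx hx hP hQ
    ⟨x, rfl⟩ ⟨x, rfl⟩ ⟨p, hp⟩ ⟨q, hq⟩
  rw [mem_singleton_iff] at ha hb
  subst ha; subst hb
  exact disjoint_left.1 hd ha' hb'

theorem liminf_zero_of {u : ℕ → ℝ≥0∞} {T : Set ℝ≥0∞} (hT : Dense T)
    (h : ∀ t ∈ T, 0 < t → ∀ N : ℕ, ∃ n, N ≤ n ∧ u n < t) : atTop.liminf u = 0 := by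
  by_contra hne
  obtain ⟨t, htT, h0, ht⟩ := hT.exists_between (pos_iff_ne_zero.2 hne)
  obtain ⟨N, hN⟩ := eventually_atTop.1 (eventually_lt_of_lt_liminf ht)
  obtain ⟨n, hn, hn'⟩ := h t htT h0 N
  exact lt_asymm hn' (hN n hn)

theorem le_limsup_of {u : ℕ → ℝ≥0∞} {T : Set ℝ≥0∞} (hT : Dense T) {β : ℝ≥0∞}
    (h : ∀ t ∈ T, t < β → ∀ N : ℕ, ∃ n, N ≤ n ∧ t < u n) : β ≤ atTop.limsup u := by
  by_contra! hne
  obtain ⟨t, htT, h0, ht⟩ := hT.exists_between hne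
  obtain ⟨N, hN⟩ := eventually_atTop.1 (eventually_lt_of_limsup_lt h0)
  obtain ⟨n, hn, hn'⟩ := h t htT ht N
  exact lt_asymm hn' (hN n hn)

theorem pair_residual [MetricSpace X] [Nonempty X] {f : X → X} (hf : Continuous f)
    (hwm : WeaklyMixing f) (n N : ℕ) (hn : 1 ≤ n) (W : Set (X × X)) (hW : IsOpen W) (hWn : W.Nonempty) :
    {p : X × X | ∃ k, N ≤ k ∧ (f^[n * k] p.1, f^[n * k] p.2) ∈ W} ∈ residual (X × X) := by
  refine residual_of_dense_open ?_ ?_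
  · have : {p : X × X | ∃ k, N ≤ k ∧ (f^[n * k] p.1, f^[n * k] p.2) ∈ W} =
        ⋃ k, ⋃ (_ : N ≤ k), (fun p : X × X => (f^[n * k] p.1, f^[n * k] p.2)) ⁻¹' W := by
      ext; simp
    rw [this]
    refine isOpen_iUnion fun k => isOpen_iUnion fun _ => hW.preimage ?_
    exact ((hf.iterate _).comp continuous_fst).prodMk ((hf.iterate _).comp continuous_snd)
  · rw [dense_iff_inter_open]
    rintro O hO ⟨⟨a, b⟩, hab⟩
    obtain ⟨A, B, hA, hB, ha, hb, hAB⟩ := isOpen_prod_iff.1 hO a b hab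
    obtain ⟨⟨c, d⟩, hcd⟩ := hWn
    obtain ⟨C, D, hC, hD, hc, hd, hCD⟩ := isOpen_prod_iff.1 hW c d hcd
    obtain ⟨k, hk, h⟩ := wm_finite hf hwm (ι := Bool) (fun i => if i then A else B)
      (fun i => if i then C else D) (by simp [hA, hB]) (by simp [hC, hD])
      (by simp only [Bool.forall_bool]; exact ⟨⟨b, hb⟩, ⟨a, ha⟩⟩)
      (by simp only [Bool.forall_bool]; exact ⟨⟨d, hd⟩, ⟨c, hc⟩⟩) n N hn
    obtain ⟨a', ha', ha''⟩ := h true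
    obtain ⟨b', hb', hb''⟩ := h false
    exact ⟨(a', b'), hAB ⟨ha', hb'⟩, k, hk, hCD ⟨ha'', hb''⟩⟩

theorem trans_residual [MetricSpace X] [Nonempty X] {f : X → X} (hf : Continuous f)
    (hwm : WeaklyMixing f) (k : ℕ) (hk : 1 ≤ k) (V : Set X) (hV : IsOpen V) (hVn : V.Nonempty) :
    {a : X | ∃ m, f^[k * m] a ∈ V} ∈ residual X := by
  refine residual_of_dense_open ?_ ?_
  · have : {a : X | ∃ m, f^[k * m] a ∈ V} = ⋃ m, (f^[k * m]) ⁻¹' V := by ext; simp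
    rw [this]
    exact isOpen_iUnion fun m => hV.preimage (hf.iterate _)
  · rw [dense_iff_inter_open]
    intro O hO hOn
    obtain ⟨m, -, h⟩ := wm_finite hf hwm (ι := Unit) (fun _ => O) (fun _ => V) (fun _ => hO)
      (fun _ => hV) (fun _ => hOn) (fun _ => hVn) k 0 hk
    obtain ⟨a, ha, ha'⟩ := h ()
    exact ⟨a, ha, m, ha'⟩

/-- General density of shadowing a moving sequence of open conditions. -/
theorem shadow_residual [MetricSpace X] [Nonempty X] {f : X → X} (hf : Continuous f)
    (hwm : WeaklyMixing f) (i N : ℕ) (y : ℕ → X) (W : Set (X × X)) (hW : IsOpen W)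
    {ι : Type*} [Finite ι] (Q : ι → Set X) (hQ : ∀ q, IsOpen (Q q)) (hQn : ∀ q, (Q q).Nonempty)
    (h : ∀ n, ∀ c : ι → X, (∀ q, c q ∈ Q q) → ∃ q, (y n, c q) ∈ W) :
    {a : X | ∃ n, N ≤ n ∧ (y n, f^[n] (f^[i] a)) ∈ W} ∈ residual X := by
  refine residual_of_dense_open ?_ ?_
  · have : {a : X | ∃ n, N ≤ n ∧ (y n, f^[n] (f^[i] a)) ∈ W} =
        ⋃ n, ⋃ (_ : N ≤ n), (fun a => (y n, f^[n] (f^[i] a))) ⁻¹' W := by ext; simp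
    rw [this]
    refine isOpen_iUnion fun n => isOpen_iUnion fun _ => hW.preimage ?_
    exact continuous_const.prodMk ((hf.iterate _).comp (hf.iterate _))
  · rw [dense_iff_inter_open]
    intro O hO hOn
    obtain ⟨m, hm, hh⟩ := wm_finite hf hwm (ι := ι) (fun _ => O) Q (fun _ => hO)
      hQ (fun _ => hOn) hQn 1 (N + i) le_rfl
    choose a ha ha' using hh
    obtain ⟨q, hq⟩ := h (m - i) (fun q => f^[1 * m] (a q)) ha'
    refine ⟨a q, ha q, m - i, by omega, ?_⟩
    rw [← Function.iterate_add_apply, Nat.sub_add_cancel (by omega)]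
    simpa using hq

theorem near_residual [MetricSpace X] [Nonempty X] {f : X → X} (hf : Continuous f)
    (hwm : WeaklyMixing f) (i N : ℕ) (x : X) (hx : IsCompact (closure (Set.range fun i : ℕ => f^[i] x)))
    (ε : ℝ≥0∞) (hε : 0 < ε) :
    {a : X | ∃ n, N ≤ n ∧ edist (f^[n] x) (f^[n] (f^[i] a)) < ε} ∈ residual X := by
  have hW : IsOpen {p : X × X | edist p.1 p.2 < ε} := isOpen_lt continuous_edist continuous_const
  have hε2 : 0 < ε / 2 := ENNReal.half_pos hε.ne'
  obtain ⟨t, -, ht⟩ := hx.elim_finite_subcover_image (b := univ) (c := fun z : X => {w : X | edist w z < ε / 2})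
    (fun z _ => isOpen_lt (by fun_prop) continuous_const) (fun w _ => by
      simp only [mem_iUnion]
      exact ⟨w, mem_univ _, by simpa using hε2⟩)
  obtain ⟨htf, ht⟩ := ht
  have := htf.to_subtype
  refine shadow_residual hf hwm i N (fun n => f^[n] x) _ hW (ι := t) (fun z => {w : X | edist w z < ε / 2})
    (fun z => isOpen_lt (by fun_prop) continuous_const) (fun z => ⟨z, by simpa using hε2⟩) ?_
  intro n c hc
  have := ht (subset_closure (mem_range_self n))
  simp only [mem_iUnion] at this
  obtain ⟨z, hz, hz'⟩ := this
  refine ⟨⟨z, hz⟩, ?_⟩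
  have h2 : edist (c ⟨z, hz⟩) z < ε / 2 := hc ⟨z, hz⟩
  calc edist (f^[n] x) (c ⟨z, hz⟩) ≤ edist (f^[n] x) z + edist (c ⟨z, hz⟩) z := edist_triangle_right _ _ _
    _ < ε / 2 + ε / 2 := ENNReal.add_lt_add hz' h2
    _ = ε := ENNReal.add_halves ε

theorem far_residual [MetricSpace X] [Nonempty X] {f : X → X} (hf : Continuous f)
    (hwm : WeaklyMixing f) (i N : ℕ) (x : X) (t : ℝ≥0∞) (ht : t < EMetric.diam (Set.univ : Set X) / 2) :
    {a : X | ∃ n, N ≤ n ∧ t < edist (f^[n] x) (f^[n] (f^[i] a))} ∈ residual X := by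
  have hW : IsOpen {p : X × X | t < edist p.1 p.2} := isOpen_lt continuous_const continuous_edist
  have hW2 : IsOpen {p : X × X | t * 2 < edist p.1 p.2} := isOpen_lt continuous_const continuous_edist
  have : ∃ p q : X, t * 2 < edist p q := by
    by_contra! hcon
    have h1 : EMetric.diam (Set.univ : Set X) ≤ t * 2 := Metric.ediam_le fun p _ q _ => hcon p q
    exact absurd ht (not_lt.2 (ENNReal.div_le_of_le_mul h1))
  obtain ⟨p, q, hpq⟩ := this
  obtain ⟨P, Q, hP, hQ, hp, hq, hPQ⟩ := isOpen_prod_iff.1 hW2 p q hpq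
  refine shadow_residual hf hwm i N (fun n => f^[n] x) _ hW (ι := Bool) (fun b => if b then P else Q)
    (by simp [hP, hQ]) (by simp only [Bool.forall_bool]; exact ⟨⟨q, hq⟩, ⟨p, hp⟩⟩) ?_
  intro n c hc
  by_contra! hcon
  have h1 : edist (f^[n] x) (c true) ≤ t := not_lt.1 (hcon true)
  have h2 : edist (f^[n] x) (c false) ≤ t := not_lt.1 (hcon false)
  have h3 : t * 2 < edist (c true) (c false) := hPQ (⟨hc true, hc false⟩ : (c true, c false) ∈ P ×ˢ Q)
  refine absurd h3 (not_lt.2 ((edist_triangle_left _ _ (f^[n] x)).trans ?_))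
  rw [mul_two]
  exact add_le_add h1 h2

end Dyn

section Fin
open Set Topology

theorem cantor_of_inj {X : Type*} [TopologicalSpace X] [T2Space X] (φ : C(CantorSp, X))
    (h : Function.Injective φ) : IsCantorSet (range φ) := by
  have hc : IsCompact (range φ) := isCompact_range φ.continuous
  refine ⟨range_nonempty _, hc, ⟨hc.isClosed, ?_⟩, ?_⟩
  · rw [preperfect_iff_nhds]
    rintro _ ⟨s, rfl⟩ U hU
    have ht : Tendsto (fun n : ℕ => Function.update s n (!(s n))) atTop (𝓝 s) := by
      rw [tendsto_pi_nhds]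
      intro j
      refine tendsto_const_nhds.congr' ?_
      filter_upwards [eventually_gt_atTop j] with n hn
      rw [Function.update_of_ne hn.ne]
    obtain ⟨n, hn⟩ := (((φ.continuous.tendsto s).comp ht).eventually hU).exists
    refine ⟨_, ⟨hn, mem_range_self _⟩, fun heq => ?_⟩
    have := congrFun (h heq) n
    simp at this
  · have he : IsEmbedding φ := (φ.continuous.isClosedEmbedding h).isEmbedding
    exact he.isTotallyDisconnected_range.2 inferInstance

end Fin

theorem scrambled_with_compact_orbit_points {X : Type*} [MetricSpace X] [Infinite X]
    [TopologicalSpace.SeparableSpace X] [LocallyCompactSpace X]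
    (f : X → X) (hf : Continuous f) (hwm : WeaklyMixing f)
    (β : ℝ≥0∞) (hβ : β = EMetric.diam (Set.univ : Set X))
    (x : ℕ → X) (hx : ∀ m, IsCompact (closure (Set.range fun i : ℕ => f^[i] (x m)))) :
    ∃ S : ℕ → Set X,
      (∀ i j, i ≠ j → Disjoint (S i) (S j)) ∧
      (∀ j, IsCantorSet (S j)) ∧
      (∀ j, ∀ a ∈ S j, TotallyTransitivePoint f a) ∧
      Dense (⋃ j, S j) ∧
      (∀ n : ℕ, 1 ≤ n → ∀ a ∈ ⋃ j, S j, ∀ b ∈ ⋃ j, S j, a ≠ b →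
        atTop.liminf (fun k : ℕ => edist (f^[n * k] a) (f^[n * k] b)) = 0 ∧
        β ≤ atTop.limsup (fun k : ℕ => edist (f^[n * k] a) (f^[n * k] b))) ∧
      (∀ m : ℕ, ∀ c ∈ ⋃ i : ℕ, f^[i] '' (⋃ j, S j),
        atTop.liminf (fun n : ℕ => edist (f^[n] (x m)) (f^[n] c)) = 0 ∧
        β / 2 ≤ atTop.limsup (fun n : ℕ => edist (f^[n] (x m)) (f^[n] c))) := by
  subst hβ
  have hpol : PolishSpace X := polish_of_locallyCompact
  obtain ⟨T, hTc, hTd⟩ := TopologicalSpace.exists_countable_dense ℝ≥0∞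
  have hperf : ∀ a : X, (nhdsWithin a {a}ᶜ).NeBot := fun a => wm_perfect hwm a
  let B := TopologicalSpace.countableBasis X
  let A : Set X := {a | (∀ k : ℕ, 1 ≤ k → ∀ V ∈ B, ∃ m, f^[k * m] a ∈ V) ∧
    (∀ m i N : ℕ, ∀ t ∈ T, 0 < t → ∃ n, N ≤ n ∧ edist (f^[n] (x m)) (f^[n] (f^[i] a)) < t) ∧
    (∀ m i N : ℕ, ∀ t ∈ T, t < EMetric.diam (Set.univ : Set X) / 2 →
      ∃ n, N ≤ n ∧ t < edist (f^[n] (x m)) (f^[n] (f^[i] a)))}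
  have hA : A ∈ residual X := by
    have h1 : ∀ᶠ a in residual X, ∀ k : ℕ, 1 ≤ k → ∀ V ∈ B, ∃ m, f^[k * m] a ∈ V := by
      rw [eventually_countable_forall]; intro k
      rw [eventually_imp_distrib_left]; intro hk
      rw [eventually_countable_ball (TopologicalSpace.countable_countableBasis X)]; intro V hV
      exact trans_residual hf hwm k hk V (TopologicalSpace.isOpen_of_mem_countableBasis hV)
        (TopologicalSpace.nonempty_of_mem_countableBasis hV)
    have h2 : ∀ᶠ a in residual X, ∀ m i N : ℕ, ∀ t ∈ T, 0 < t →
        ∃ n, N ≤ n ∧ edist (f^[n] (x m)) (f^[n] (f^[i] a)) < t := by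
      rw [eventually_countable_forall]; intro m
      rw [eventually_countable_forall]; intro i
      rw [eventually_countable_forall]; intro N
      rw [eventually_countable_ball hTc]; intro t ht
      rw [eventually_imp_distrib_left]; intro h0
      exact near_residual hf hwm i N (x m) (hx m) t h0
    have h3 : ∀ᶠ a in residual X, ∀ m i N : ℕ, ∀ t ∈ T, t < EMetric.diam (Set.univ : Set X) / 2 →
        ∃ n, N ≤ n ∧ t < edist (f^[n] (x m)) (f^[n] (f^[i] a)) := by
      rw [eventually_countable_forall]; intro m
      rw [eventually_countable_forall]; intro i
      rw [eventually_countable_forall]; intro N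
      rw [eventually_countable_ball hTc]; intro t ht
      rw [eventually_imp_distrib_left]; intro h0
      exact far_residual hf hwm i N (x m) t h0
    filter_upwards [h1, h2, h3] with a ha hb hc
    exact ⟨ha, hb, hc⟩
  let R : Set (X × X) := {p | p.1 ∈ A ∧
    (∀ n : ℕ, 1 ≤ n → ∀ N : ℕ, ∀ t ∈ T, 0 < t →
      ∃ k, N ≤ k ∧ edist (f^[n * k] p.1) (f^[n * k] p.2) < t) ∧
    (∀ n : ℕ, 1 ≤ n → ∀ N : ℕ, ∀ t ∈ T, t < EMetric.diam (Set.univ : Set X) →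
      ∃ k, N ≤ k ∧ t < edist (f^[n * k] p.1) (f^[n * k] p.2))}
  have hR : R ∈ residual (X × X) := by
    have h1 : ∀ᶠ p in residual (X × X), p.1 ∈ A :=
      tendsto_residual_of_isOpenMap continuous_fst isOpenMap_fst hA
    have h2 : ∀ᶠ p in residual (X × X), ∀ n : ℕ, 1 ≤ n → ∀ N : ℕ, ∀ t ∈ T, 0 < t →
        ∃ k, N ≤ k ∧ edist (f^[n * k] p.1) (f^[n * k] p.2) < t := by
      rw [eventually_countable_forall]; intro n
      rw [eventually_imp_distrib_left]; intro hn
      rw [eventually_countable_forall]; intro N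
      rw [eventually_countable_ball hTc]; intro t ht
      rw [eventually_imp_distrib_left]; intro h0
      obtain ⟨a⟩ : Nonempty X := inferInstance
      exact pair_residual hf hwm n N hn {p | edist p.1 p.2 < t}
        (isOpen_lt continuous_edist continuous_const) ⟨(a, a), by simpa using h0⟩
    have h3 : ∀ᶠ p in residual (X × X), ∀ n : ℕ, 1 ≤ n → ∀ N : ℕ, ∀ t ∈ T,
        t < EMetric.diam (Set.univ : Set X) →
        ∃ k, N ≤ k ∧ t < edist (f^[n * k] p.1) (f^[n * k] p.2) := by
      rw [eventually_countable_forall]; intro n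
      rw [eventually_imp_distrib_left]; intro hn
      rw [eventually_countable_forall]; intro N
      rw [eventually_countable_ball hTc]; intro t ht
      rw [eventually_imp_distrib_left]; intro h0
      refine pair_residual hf hwm n N hn {p | t < edist p.1 p.2}
        (isOpen_lt continuous_const continuous_edist) ?_
      by_contra hcon
      refine absurd h0 (not_lt.2 (Metric.ediam_le fun p _ q _ => ?_))
      by_contra! hpq
      exact hcon ⟨(p, q), hpq⟩
    filter_upwards [h1, h2, h3] with p ha hb hc
    exact ⟨ha, hb, hc⟩
  obtain ⟨φ, hφd, hφ⟩ := mycielski hperf R hR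
  have hAmem : ∀ j s, φ j s ∈ A := fun j s =>
    (hφ j (j + 1) s s (by simp)).1.1
  refine ⟨fun j => Set.range (φ j), ?_, ?_, ?_, hφd, ?_, ?_⟩
  · intro i j hij
    rw [Set.disjoint_left]
    rintro _ ⟨s, rfl⟩ ⟨t, ht⟩
    exact (hφ i j s t (by simp [hij])).2 ht.symm
  · intro j
    refine cantor_of_inj (φ j) fun s t hst => ?_
    by_contra hne
    exact (hφ j j s t (by simp [hne])).2 hst
  · rintro j _ ⟨s, rfl⟩ k hk
    rw [(TopologicalSpace.isBasis_countableBasis X).dense_iff]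
    intro V hV _
    obtain ⟨m, hm⟩ := (hAmem j s).1 k hk V hV
    exact ⟨_, hm, m, rfl⟩
  · intro n hn a ha b hb hab
    obtain ⟨i, s, rfl⟩ := Set.mem_iUnion.1 ha
    obtain ⟨j, t, rfl⟩ := Set.mem_iUnion.1 hb
    have h := (hφ i j s t (fun h => hab (by rw [Prod.mk.injEq] at h; rw [h.1, h.2]))).1
    exact ⟨liminf_zero_of hTd fun r hr h0 N => h.2.1 n hn N r hr h0,
      le_limsup_of hTd fun r hr h0 N => h.2.2 n hn N r hr h0⟩
  · intro m c hc
    obtain ⟨i, a, ha, rfl⟩ := Set.mem_iUnion.1 hc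
    obtain ⟨j, s, rfl⟩ := Set.mem_iUnion.1 ha
    have h := hAmem j s
    exact ⟨liminf_zero_of hTd fun r hr h0 N => h.2.1 m i N r hr h0,
      le_limsup_of hTd fun r hr h0 N => h.2.2 m i N r hr h0⟩
end
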